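/- For every τ ∈ H and every Schwartz function φ on ℝ, ∫_ℝ F(φ)(x) ω_τ(x) dx = (−iτ)^{-1} ∫_ℝ φ(x) ω_{−1/τ}(x) dx, where F(φ)(x) := ∫_ℝ φ(w) e(wx) dw; that is, the Fourier transform of the tempered distribution induced by ω_τ equals (−iτ)^{-1} times the tempered distribution induced by ω_{−1/τ}. -/

import Mathlib

open Complex MeasureTheory
open scoped Classical

noncomputable section

/-- `e(a) = exp(2πia)`. -/
def e (a : ℂ) : ℂ := Complex.exp (2 * (Real.pi : ℂ) * Complex.I * a)

/-- The Fourier transform `F(g)(x) = ∫ g(w) e(wx) dw`. -/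
def fourierT (g : ℝ → ℂ) (x : ℝ) : ℂ := ∫ w : ℝ, g w * e ((w * x : ℝ))

/-- The operator `E_σ(f)(x) = e(x²σ/2) ∫_0^x e(-w²σ/2) f(w) dw`. -/
def Eop (σ : ℂ) (f : ℝ → ℂ) (x : ℝ) : ℂ :=
  e ((x : ℂ)^2 * σ / 2) * ∫ w in (0:ℝ)..x, e (-(w : ℂ)^2 * σ / 2) * f w

/-- `ω_τ(x) = e(-x²τ/2) ∑_{m ∈ ℤ+1/2, m ≥ |x|} e(m²τ/2 + m/2)`. -/
def omega (τ : ℂ) (x : ℝ) : ℂ :=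
  e (-(x : ℂ)^2 * τ / 2) *
    ∑' m : ℤ, if |x| ≤ (m : ℝ) + 1/2 then
      e (((m : ℂ) + 1/2)^2 / 2 * τ + ((m : ℂ) + 1/2) / 2) else 0

/-- `η³(τ) = -i ∑_{m ∈ ℤ+1/2} m e(m²τ/2 + m/2)`. -/
def eta3 (τ : ℂ) : ℂ :=
  -Complex.I * ∑' m : ℤ, ((m : ℂ) + 1/2) * e (((m : ℂ) + 1/2)^2 / 2 * τ + ((m : ℂ) + 1/2) / 2)

/-- The complementary error function. -/
def erfc (x : ℝ) : ℝ := (2 / Real.sqrt Real.pi) * ∫ t in Set.Ioi x, Real.exp (-t^2)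

/-- `g⁺_τ`. -/
def gplus (τ : ℂ) (x : ℝ) : ℂ :=
  e (-(x : ℂ)^2 * τ / 2) * ((Real.sign x : ℂ) / (Complex.I * eta3 τ)) *
    ∑' m : ℤ, if |x| < (m : ℝ) + 1/2 then
      (((m : ℝ) + 1/2 - |x| : ℝ) : ℂ) * e (((m : ℂ) + 1/2)^2 / 2 * τ + ((m : ℂ) + 1/2) / 2)
    else 0

/-- `g*_τ`. -/
def gstar (τ : ℂ) (x : ℝ) : ℂ :=
  e (-(x : ℂ)^2 * τ / 2) * ((Real.sign x : ℂ) / 2) *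
    (erfc (Real.sqrt (2 * Real.pi * τ.im) * |x|) : ℂ)

/-- `g_τ = g⁺_τ - g*_τ`. -/
def gfun (τ : ℂ) (x : ℝ) : ℂ := gplus τ x - gstar τ x

/-- The operator `ξ_k f = 2i v^k conj(∂f/∂τ̄)`, with `∂/∂τ̄ = (1/2)(∂/∂u + i ∂/∂v)`. -/
def xi (k : ℝ) (f : ℂ → ℂ) (τ : ℂ) : ℂ :=
  2 * Complex.I * ((τ.im ^ k : ℝ) : ℂ) *
    (starRingEnd ℂ) ((1/2 : ℂ) * (fderiv ℝ f τ 1 + Complex.I * fderiv ℝ f τ Complex.I))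

/-- Sum of divisors function `σ₁`. -/
def sigma1 (n : ℕ) : ℕ := ∑ d ∈ Nat.divisors n, d

/-- The weight 2 Eisenstein series `E₂`. -/
def E2 (τ : ℂ) : ℂ := 1 - 24 * ∑' n : ℕ, (sigma1 (n+1) : ℂ) * e ((n + 1 : ℂ) * τ)

/-- `ϑ̃_{N,h}`. -/
def tvtheta (N : ℕ) (h : ℝ) (τ : ℂ) : ℂ :=
  (if ∃ m : ℤ, h = (m : ℝ) + 1/2 then
      e ((h : ℂ) / 2) * E2 τ / (12 * (N : ℂ) * Complex.I * eta3 τ) else 0)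
  + ∑' n : ℤ, gfun τ ((N : ℝ) * n + h)

/-- The Schwartz function `φ_τ(x,y) = √(2v)·x·e(x²τ/2 - y²τ̄/2)`. -/
def Phi (τ : ℂ) (x y : ℝ) : ℂ :=
  (Real.sqrt (2 * τ.im) : ℂ) * (x : ℂ) *
    e ((x : ℂ)^2 * τ / 2 - (y : ℂ)^2 * (starRingEnd ℂ) τ / 2)

/-- The signature (1,1) bilinear form `B((a₁,a₂),(b₁,b₂)) = a₁b₂ + a₂b₁`. -/
def Bform (a b : ℝ × ℝ) : ℝ := a.1 * b.2 + a.2 * b.1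

/-- `Z⁺_t = (t/√2, t⁻¹/√2)`. -/
def Zp (t : ℝ) : ℝ × ℝ := (t / Real.sqrt 2, t⁻¹ / Real.sqrt 2)

/-- `Z⁻_t = (t/√2, -t⁻¹/√2)`. -/
def Zm (t : ℝ) : ℝ × ℝ := (t / Real.sqrt 2, -t⁻¹ / Real.sqrt 2)

end

/-!
For `0 < im σ` the operator `D_σ ψ = ψ' - 2πiσx ψ` maps the Schwartz space onto itself: `E_σ`
inverts it on the right and preserves rapid decay. Integrating `D_σ ψ` against one term of `ω_σ`
is integrating an exact derivative over `[-m, m]`, so `ω_σ` pairs with `D_σ ψ` to the value at `ψ`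
of the distribution `∑ e(m/2) δ_m` over `m ∈ ℤ + 1/2`, which does not depend on `σ`. The Fourier
transform turns `D_{-1/τ}` into `τ⁻¹ D_τ`, and by Poisson summation that distribution is an
eigenvector of the Fourier transform with eigenvalue `i`. This gives the factor `i τ⁻¹ = (-iτ)⁻¹`.
-/

section

open SchwartzMap FourierTransform

section Character

lemma e_zero : e 0 = 1 := by simp [e]

lemma e_add (a b : ℂ) : e (a + b) = e a * e b := by
  simp only [e, mul_add, Complex.exp_add]

lemma e_intCast (n : ℤ) : e n = 1 :=
  Complex.exp_eq_one_iff.mpr ⟨n, by ring⟩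

lemma e_half : e (1 / 2) = -1 := by
  rw [e, ← Complex.exp_pi_mul_I]
  ring_nf

lemma e_quarter : e (1 / 4) = I := by
  rw [e, show 2 * (Real.pi : ℂ) * I * (1 / 4) = Real.pi / 2 * I by ring,
    Complex.exp_pi_div_two_mul_I]

lemma norm_e (a : ℂ) : ‖e a‖ = Real.exp (-(2 * Real.pi * a.im)) := by
  simp [e, Complex.norm_exp]

lemma norm_e_ofReal (a : ℝ) : ‖e a‖ = 1 := by simp [norm_e]

lemma hasDerivAt_e_sq (σ : ℂ) (x : ℝ) :
    HasDerivAt (fun x : ℝ ↦ e ((x : ℂ) ^ 2 * σ / 2))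
      (2 * Real.pi * I * σ * x * e ((x : ℂ) ^ 2 * σ / 2)) x := by
  have h := ((((hasDerivAt_pow 2 (x : ℂ)).mul_const σ).div_const 2).const_mul
    (2 * (Real.pi : ℂ) * I)).cexp.comp_ofReal
  refine h.congr_deriv ?_
  simp only [e]
  push_cast
  ring

end Character

section RapidlyDecreasing

/-- `f` decays faster than every power of `‖x‖`. No smoothness is required, so that the notion
applies to the derivatives of a function before it is known to be Schwartz. -/
def RapidlyDecreasing {E F : Type*} [Norm E] [Norm F] (f : E → F) : Prop :=
  ∀ k : ℕ, ∃ C : ℝ, ∀ x, (1 + ‖x‖) ^ k * ‖f x‖ ≤ C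

namespace RapidlyDecreasing

variable {E F A : Type*} [SeminormedAddCommGroup E] [SeminormedAddCommGroup F]
  [SeminormedRing A]

lemma add {f g : E → F} (hf : RapidlyDecreasing f) (hg : RapidlyDecreasing g) :
    RapidlyDecreasing (fun x ↦ f x + g x) := by
  intro k
  obtain ⟨C, hC⟩ := hf k
  obtain ⟨D, hD⟩ := hg k
  refine ⟨C + D, fun x ↦ ?_⟩
  calc (1 + ‖x‖) ^ k * ‖f x + g x‖ ≤ (1 + ‖x‖) ^ k * (‖f x‖ + ‖g x‖) := by
        gcongr
        exact norm_add_le _ _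
    _ ≤ C + D := by linarith [hC x, hD x]

lemma sum {ι : Type*} {s : Finset ι} {f : ι → E → F} (hf : ∀ i ∈ s, RapidlyDecreasing (f i)) :
    RapidlyDecreasing (fun x ↦ ∑ i ∈ s, f i x) := by
  intro k
  choose! C hC using fun i hi ↦ hf i hi k
  refine ⟨∑ i ∈ s, C i, fun x ↦ ?_⟩
  calc (1 + ‖x‖) ^ k * ‖∑ i ∈ s, f i x‖ ≤ (1 + ‖x‖) ^ k * ∑ i ∈ s, ‖f i x‖ := by
        gcongr
        exact norm_sum_le _ _
    _ ≤ ∑ i ∈ s, C i := by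
        rw [Finset.mul_sum]
        exact Finset.sum_le_sum fun i hi ↦ hC i hi x

lemma mul_of_norm_le {g f : E → A} (hf : RapidlyDecreasing f) {p : ℕ} {B : ℝ}
    (hg : ∀ x, ‖g x‖ ≤ B * (1 + ‖x‖) ^ p) : RapidlyDecreasing (fun x ↦ g x * f x) := by
  intro k
  obtain ⟨C, hC⟩ := hf (k + p)
  have hB : 0 ≤ B := nonneg_of_mul_nonneg_left ((norm_nonneg _).trans (hg 0)) (by positivity)
  refine ⟨B * C, fun x ↦ ?_⟩
  calc (1 + ‖x‖) ^ k * ‖g x * f x‖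
      ≤ (1 + ‖x‖) ^ k * (B * (1 + ‖x‖) ^ p * ‖f x‖) := by
        gcongr
        exact (norm_mul_le _ _).trans (by gcongr; exact hg x)
    _ = B * ((1 + ‖x‖) ^ (k + p) * ‖f x‖) := by ring
    _ ≤ B * C := by gcongr; exact hC x

end RapidlyDecreasing

variable {E F A : Type*} [NormedAddCommGroup E] [NormedSpace ℝ E]
  [NormedAddCommGroup F] [NormedSpace ℝ F] [NormedRing A] [NormedAlgebra ℝ A]

lemma rapidlyDecreasing_iteratedFDeriv (φ : 𝓢(E, F)) (n : ℕ) :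
    RapidlyDecreasing (iteratedFDeriv ℝ n φ) :=
  fun k ↦ ⟨_, fun x ↦ one_add_le_sup_seminorm_apply (𝕜 := ℝ) (m := (k, n)) le_rfl le_rfl φ x⟩

lemma rapidlyDecreasing_iteratedDeriv (φ : 𝓢(ℝ, F)) (n : ℕ) :
    RapidlyDecreasing (iteratedDeriv n φ) := by
  simpa only [RapidlyDecreasing, norm_iteratedFDeriv_eq_norm_iteratedDeriv]
    using rapidlyDecreasing_iteratedFDeriv φ n

lemma rapidlyDecreasing_coe (φ : 𝓢(E, F)) : RapidlyDecreasing φ := by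
  simpa only [RapidlyDecreasing, norm_iteratedFDeriv_zero]
    using rapidlyDecreasing_iteratedFDeriv φ 0

lemma contDiff_of_hasDerivAt_mul_add {f g φ : ℝ → A} {n : ℕ} (hg : ContDiff ℝ n g)
    (hφ : ContDiff ℝ n φ) (hf : ∀ x, HasDerivAt f (g x * f x + φ x) x) : ContDiff ℝ n f := by
  have hf_diff : Differentiable ℝ f := fun x ↦ (hf x).differentiableAt
  induction n with
  | zero => exact contDiff_zero.mpr hf_diff.continuous
  | succ n ih =>
    have hn : (n : WithTop ℕ∞) ≤ (n + 1 : ℕ) := by exact_mod_cast n.le_succ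
    rw [Nat.cast_succ, contDiff_succ_iff_deriv, funext fun x ↦ (hf x).deriv]
    exact ⟨hf_diff, by simp, ((hg.of_le hn).mul (ih (hg.of_le hn) (hφ.of_le hn))).add
      (hφ.of_le hn)⟩

lemma rapidlyDecreasing_iteratedDeriv_of_hasDerivAt_mul_add {f g : ℝ → A} {φ : 𝓢(ℝ, A)}
    (hg : g.HasTemperateGrowth) (hf : ∀ x, HasDerivAt f (g x * f x + φ x) x)
    (hf_decay : RapidlyDecreasing f) (n : ℕ) : RapidlyDecreasing (iteratedDeriv n f) := by
  have hf_smooth (m : ℕ) : ContDiff ℝ m f :=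
    contDiff_of_hasDerivAt_mul_add (hg.1.of_le (by exact_mod_cast le_top)) (φ.smooth m) hf
  have hg_smooth (m : ℕ) : ContDiff ℝ m g := hg.1.of_le (by exact_mod_cast le_top)
  induction n using Nat.strong_induction_on with
  | _ n ih =>
    rcases n with _ | n
    · simpa only [iteratedDeriv_zero] using hf_decay
    have leibniz : iteratedDeriv (n + 1) f = fun x ↦
        (∑ i ∈ Finset.range (n + 1),
          (n.choose i * iteratedDeriv i g x) * iteratedDeriv (n - i) f x) +
        iteratedDeriv n φ x := by
      ext x
      rw [iteratedDeriv_succ', funext fun x ↦ (hf x).deriv, iteratedDeriv_fun_add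
        ((hg_smooth n).mul (hf_smooth n)).contDiffAt (φ.smooth n).contDiffAt,
        iteratedDeriv_fun_mul (hg_smooth n).contDiffAt (hf_smooth n).contDiffAt]
    rw [leibniz]
    refine (RapidlyDecreasing.sum fun i _ ↦ ?_).add (rapidlyDecreasing_iteratedDeriv φ n)
    obtain ⟨p, B, hB⟩ := hg.2 i
    refine (ih (n - i) (by lia)).mul_of_norm_le (p := p)
      (B := ‖(n.choose i : A)‖ * B) fun x ↦ ?_
    calc ‖n.choose i * iteratedDeriv i g x‖
        ≤ ‖(n.choose i : A)‖ * ‖iteratedFDeriv ℝ i g x‖ := by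
          rw [norm_iteratedFDeriv_eq_norm_iteratedDeriv]
          exact norm_mul_le _ _
      _ ≤ ‖(n.choose i : A)‖ * B * (1 + ‖x‖) ^ p := by
          rw [mul_assoc]
          gcongr
          exact hB x

lemma exists_schwartzMap_of_hasDerivAt_mul_add {f g : ℝ → A} {φ : 𝓢(ℝ, A)}
    (hg : g.HasTemperateGrowth) (hf : ∀ x, HasDerivAt f (g x * f x + φ x) x)
    (hf_decay : RapidlyDecreasing f) : ∃ ψ : 𝓢(ℝ, A), ⇑ψ = f := by
  refine ⟨⟨f, contDiff_infty.mpr fun n ↦ contDiff_of_hasDerivAt_mul_add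
    (hg.1.of_le (by exact_mod_cast le_top)) (φ.smooth n) hf, fun k n ↦ ?_⟩, rfl⟩
  obtain ⟨C, hC⟩ := rapidlyDecreasing_iteratedDeriv_of_hasDerivAt_mul_add hg hf hf_decay n k
  refine ⟨C, fun x ↦ le_trans ?_ (hC x)⟩
  rw [norm_iteratedFDeriv_eq_norm_iteratedDeriv]
  gcongr
  linarith

end RapidlyDecreasing

section GaussianKernel

/-- The propagator of the equation `f' = 2πiσx f`: it carries the value of a solution at `y` to its
value at `x`. It is the kernel of `Eop σ`, and the terms of `omega σ` are its truncations. -/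
noncomputable def gaussianKernel (σ : ℂ) (x y : ℝ) : ℂ := e (((x : ℂ) ^ 2 - (y : ℂ) ^ 2) * σ / 2)

variable {σ : ℂ}

lemma gaussianKernel_eq_mul (σ : ℂ) (x y : ℝ) :
    gaussianKernel σ x y = e ((x : ℂ) ^ 2 * σ / 2) * e (-(y : ℂ) ^ 2 * σ / 2) := by
  rw [gaussianKernel, ← e_add]
  ring_nf

lemma gaussianKernel_self (σ : ℂ) (x : ℝ) : gaussianKernel σ x x = 1 := by
  simp [gaussianKernel, e_zero]

lemma gaussianKernel_neg_right (σ : ℂ) (x y : ℝ) :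
    gaussianKernel σ x (-y) = gaussianKernel σ x y := by
  simp [gaussianKernel]

lemma norm_gaussianKernel (σ : ℂ) (x y : ℝ) :
    ‖gaussianKernel σ x y‖ = Real.exp (-(Real.pi * σ.im * (x ^ 2 - y ^ 2))) := by
  have h_arg : ((x : ℂ) ^ 2 - (y : ℂ) ^ 2) * σ / 2 = (((x ^ 2 - y ^ 2) / 2 : ℝ) : ℂ) * σ := by
    push_cast
    ring
  rw [gaussianKernel, norm_e, h_arg, Complex.im_ofReal_mul]
  ring_nf

lemma hasDerivAt_gaussianKernel_right (σ : ℂ) (x y : ℝ) :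
    HasDerivAt (gaussianKernel σ x) (-(2 * Real.pi * I * σ * y) * gaussianKernel σ x y) y := by
  have h := (hasDerivAt_e_sq (-σ) y).const_mul (e ((x : ℂ) ^ 2 * σ / 2))
  simp only [mul_neg, ← neg_mul] at h
  rw [funext (gaussianKernel_eq_mul σ x)]
  refine h.congr_deriv ?_
  beta_reduce
  ring

lemma continuous_gaussianKernel_right (σ : ℂ) (x : ℝ) : Continuous (gaussianKernel σ x) :=
  continuous_iff_continuousAt.mpr fun y ↦ (hasDerivAt_gaussianKernel_right σ x y).continuousAt

lemma exists_one_add_pow_mul_exp_neg_le {a : ℝ} (ha : 0 < a) (k : ℕ) :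
    ∃ C : ℝ, ∀ s, 0 ≤ s → (1 + s) ^ k * Real.exp (-(a * s)) ≤ C := by
  refine ⟨Real.exp a * (k.factorial / a ^ k), fun s hs ↦ ?_⟩
  have h_exp := Real.pow_div_factorial_le_exp (x := a * (1 + s)) (by positivity) k
  have h_split : Real.exp (a * (1 + s)) = Real.exp a * Real.exp (a * s) := by
    rw [← Real.exp_add]
    ring_nf
  rw [h_split, div_le_iff₀ (by positivity), mul_pow] at h_exp
  rw [Real.exp_neg, ← div_eq_mul_inv, div_le_iff₀ (by positivity), ← mul_div_assoc,
    div_mul_eq_mul_div, le_div_iff₀ (by positivity)]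
  linarith

lemma one_add_abs_le_of_abs_le {x y : ℝ} (hyx : |y| ≤ |x|) :
    1 + |x| ≤ 2 * ((1 + (x ^ 2 - y ^ 2)) * (1 + |y|)) := by
  have h_diff : 1 + (|x| - |y|) ≤ 2 * (1 + (x ^ 2 - y ^ 2)) := by
    rw [← sq_abs x, ← sq_abs y]
    nlinarith [abs_nonneg y, sq_nonneg (|x| - |y| - 1 / 2),
      mul_nonneg (sub_nonneg.mpr hyx) (abs_nonneg y)]
  calc 1 + |x| ≤ (1 + (|x| - |y|)) * (1 + |y|) := by
        nlinarith [mul_nonneg (sub_nonneg.mpr hyx) (abs_nonneg y)]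
    _ ≤ 2 * (1 + (x ^ 2 - y ^ 2)) * (1 + |y|) := by gcongr
    _ = 2 * ((1 + (x ^ 2 - y ^ 2)) * (1 + |y|)) := mul_assoc _ _ _

lemma RapidlyDecreasing.exists_gaussianKernel_mul_le {F : Type*} [SeminormedAddCommGroup F]
    {f : ℝ → F} (hf : RapidlyDecreasing f) (hσ : 0 < σ.im) (k : ℕ) :
    ∃ C : ℝ, ∀ x y : ℝ, |y| ≤ |x| → (1 + |x|) ^ k * (‖gaussianKernel σ x y‖ * ‖f y‖) ≤ C := by
  obtain ⟨A, hA⟩ := hf k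
  obtain ⟨B, hB⟩ := exists_one_add_pow_mul_exp_neg_le (mul_pos Real.pi_pos hσ) k
  refine ⟨2 ^ k * (B * A), fun x y hyx ↦ ?_⟩
  have h_gap : 0 ≤ x ^ 2 - y ^ 2 := sub_nonneg.mpr (sq_le_sq.mpr hyx)
  have h_split := one_add_abs_le_of_abs_le hyx
  have hB_gap := hB _ h_gap
  rw [norm_gaussianKernel]
  generalize x ^ 2 - y ^ 2 = s at *
  calc (1 + |x|) ^ k * (Real.exp (-(Real.pi * σ.im * s)) * ‖f y‖)
      ≤ (2 * ((1 + s) * (1 + |y|))) ^ k * (Real.exp (-(Real.pi * σ.im * s)) * ‖f y‖) := by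
        gcongr
    _ = 2 ^ k * (((1 + s) ^ k * Real.exp (-(Real.pi * σ.im * s))) *
          ((1 + |y|) ^ k * ‖f y‖)) := by
        rw [mul_pow, mul_pow]
        ring
    _ ≤ 2 ^ k * (B * A) := by
        have hB_nonneg : 0 ≤ B := le_trans (by positivity) hB_gap
        gcongr
        exact hA y

lemma Eop_eq_integral_gaussianKernel (σ : ℂ) (f : ℝ → ℂ) (x : ℝ) :
    Eop σ f x = ∫ y in (0 : ℝ)..x, gaussianKernel σ x y * f y := by
  simp only [Eop, gaussianKernel_eq_mul, mul_assoc, intervalIntegral.integral_const_mul]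

lemma RapidlyDecreasing.eop {f : ℝ → ℂ} (hf : RapidlyDecreasing f) (hσ : 0 < σ.im) :
    RapidlyDecreasing (Eop σ f) := by
  intro k
  obtain ⟨C, hC⟩ := hf.exists_gaussianKernel_mul_le hσ (k + 1)
  refine ⟨C, fun x ↦ ?_⟩
  have h_integrand : ∀ y ∈ Set.uIoc 0 x,
      ‖gaussianKernel σ x y * f y‖ ≤ C / (1 + |x|) ^ (k + 1) := by
    intro y hy
    have hyx : |y| ≤ |x| := by
      simpa using Set.abs_sub_left_of_mem_uIcc (Set.uIoc_subset_uIcc hy)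
    rw [norm_mul, le_div_iff₀' (by positivity)]
    exact hC x y hyx
  have h_integral := intervalIntegral.norm_integral_le_of_norm_le_const h_integrand
  have hC_nonneg : 0 ≤ C := le_trans (by positivity) (hC x x le_rfl)
  rw [Eop_eq_integral_gaussianKernel]
  calc (1 + ‖x‖) ^ k * ‖∫ y in (0 : ℝ)..x, gaussianKernel σ x y * f y‖
      ≤ (1 + |x|) ^ k * (C / (1 + |x|) ^ (k + 1) * (1 + |x|)) := by
        rw [Real.norm_eq_abs x]
        gcongr
        refine h_integral.trans ?_
        gcongr
        simp
    _ = C := by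
        rw [pow_succ]
        field_simp

lemma hasDerivAt_Eop (σ : ℂ) {f : ℝ → ℂ} (hf : Continuous f) (x : ℝ) :
    HasDerivAt (Eop σ f) (2 * Real.pi * I * σ * x * Eop σ f x + f x) x := by
  have h_cont : Continuous fun w : ℝ ↦ e (-(w : ℂ) ^ 2 * σ / 2) * f w := by
    refine Continuous.mul ?_ hf
    exact (continuous_gaussianKernel_right σ 0).congr fun w ↦ by simp [gaussianKernel]
  have h := (hasDerivAt_e_sq σ x).mul (h_cont.integral_hasStrictDerivAt 0 x).hasDerivAt
  refine h.congr_deriv ?_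
  rw [← mul_assoc (e _) (e _), ← gaussianKernel_eq_mul, gaussianKernel_self, Eop]
  ring

end GaussianKernel

section TwistedDeriv

/-- The operator `ψ ↦ ψ' - 2πiσx ψ` on Schwartz functions, the conjugate of differentiation by the
Gaussian `x ↦ e(σx²/2)`. -/
noncomputable def twistedDeriv (σ : ℂ) : 𝓢(ℝ, ℂ) →L[ℂ] 𝓢(ℝ, ℂ) :=
  derivCLM ℂ ℂ - (2 * Real.pi * I * σ) • smulLeftCLM ℂ Complex.ofReal

lemma twistedDeriv_apply (σ : ℂ) (ψ : 𝓢(ℝ, ℂ)) (x : ℝ) :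
    twistedDeriv σ ψ x = deriv ψ x - 2 * Real.pi * I * σ * x * ψ x := by
  change deriv ψ x - (2 * Real.pi * I * σ) • smulLeftCLM ℂ Complex.ofReal ψ x = _
  rw [smulLeftCLM_apply_apply (by fun_prop), smul_smul, smul_eq_mul]

lemma twistedDeriv_surjective {σ : ℂ} (hσ : 0 < σ.im) : Function.Surjective (twistedDeriv σ) := by
  intro φ
  have h_ode := hasDerivAt_Eop σ φ.continuous
  obtain ⟨ψ, hψ⟩ := exists_schwartzMap_of_hasDerivAt_mul_add (by fun_prop) h_ode
    ((rapidlyDecreasing_coe φ).eop hσ)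
  refine ⟨ψ, SchwartzMap.ext fun x ↦ ?_⟩
  rw [twistedDeriv_apply, hψ, (h_ode x).deriv, add_sub_cancel_left]

section Fourier

variable {F : Type*} [NormedAddCommGroup F] [NormedSpace ℂ F]

lemma smulLeftCLM_inner_one (f : 𝓢(ℝ, F)) :
    smulLeftCLM F (inner ℝ · (1 : ℝ)) f = smulLeftCLM F Complex.ofReal f := by
  have h : (fun x : ℝ ↦ inner ℝ x (1 : ℝ)) = id := by ext; simp
  rw [h, ← smulLeftCLM_ofReal ℂ (by fun_prop)]
  rfl

lemma lineDerivOp_one (f : 𝓢(ℝ, F)) : LineDeriv.lineDerivOp (1 : ℝ) f = derivCLM ℂ F f :=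
  rfl

lemma fourierInv_derivCLM [CompleteSpace F] (f : 𝓢(ℝ, F)) :
    𝓕⁻ (derivCLM ℂ F f) = -(2 * Real.pi * I) • smulLeftCLM F Complex.ofReal (𝓕⁻ f) := by
  rw [← lineDerivOp_one, fourierInv_lineDerivOp_eq, smulLeftCLM_inner_one]

lemma derivCLM_fourierInv (f : 𝓢(ℝ, F)) :
    derivCLM ℂ F (𝓕⁻ f) = 𝓕⁻ ((2 * Real.pi * I) • smulLeftCLM F Complex.ofReal f) := by
  rw [← lineDerivOp_one, lineDerivOp_fourierInv_eq, smulLeftCLM_inner_one]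

end Fourier

lemma fourierInv_twistedDeriv {τ : ℂ} (hτ : τ ≠ 0) (ψ : 𝓢(ℝ, ℂ)) :
    𝓕⁻ (twistedDeriv (-1 / τ) ψ) = τ⁻¹ • twistedDeriv τ (𝓕⁻ ψ) := by
  have h_split : twistedDeriv (-1 / τ) ψ =
      derivCLM ℂ ℂ ψ + τ⁻¹ • ((2 * Real.pi * I) • smulLeftCLM ℂ Complex.ofReal ψ) := by
    rw [smul_smul, twistedDeriv, sub_apply, smul_apply, sub_eq_add_neg, ← neg_smul]
    congr 2
    ring
  rw [h_split, FourierTransform.fourierInv_add, FourierTransform.fourierInv_smul,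
    fourierInv_derivCLM, ← derivCLM_fourierInv, twistedDeriv, sub_apply, smul_apply, smul_sub,
    smul_smul, sub_eq_neg_add, ← neg_smul]
  congr 2
  field_simp

lemma fourierT_eq_fourierInv (g : ℝ → ℂ) : fourierT g = 𝓕⁻ g := by
  ext x
  rw [fourierT, Real.fourierInv_eq']
  congr 1 with w
  rw [smul_eq_mul, mul_comm, e, RCLike.inner_apply, conj_trivial]
  push_cast
  ring_nf

end TwistedDeriv

section Pairing

/-- The Gaussian `x ↦ e((m² - x²)σ/2)` cut off to `[-m, m]`, where it takes the value `1` at both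
endpoints. Up to phases, `omega σ` is the sum of these over the positive half-integers `m`. -/
noncomputable def truncatedGaussian (σ : ℂ) (m : ℝ) : ℝ → ℂ :=
  (Set.Icc (-m) m).indicator (gaussianKernel σ m)

/-- The phase `e(m/2)` at the half-integer `m = n + 1/2`. -/
noncomputable def halfIntegerPhase (n : ℤ) : ℂ := e (((n : ℂ) + 1 / 2) / 2)

lemma norm_halfIntegerPhase (n : ℤ) : ‖halfIntegerPhase n‖ = 1 := by
  rw [halfIntegerPhase, ← norm_e_ofReal ((n + 1 / 2) / 2)]
  push_cast
  rfl

lemma omega_eq_tsum_truncatedGaussian (σ : ℂ) (x : ℝ) :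
    omega σ x = ∑' n : ℕ, halfIntegerPhase n * truncatedGaussian σ (n + 1 / 2) x := by
  have h_support : Function.support (fun n : ℤ ↦
      halfIntegerPhase n * truncatedGaussian σ (n + 1 / 2) x) ⊆ Set.range ((↑) : ℕ → ℤ) := by
    intro n hn
    contrapose! hn
    have hn_neg : n ≤ -1 := by
      by_contra! h
      exact hn ⟨n.toNat, by lia⟩
    have hn_real : (n : ℝ) ≤ -1 := by exact_mod_cast hn_neg
    rw [Function.notMem_support, truncatedGaussian, Set.Icc_eq_empty (by linarith)]
    simp
  rw [omega, ← tsum_mul_left]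
  trans ∑' n : ℤ, halfIntegerPhase n * truncatedGaussian σ (n + 1 / 2) x
  · refine tsum_congr fun n ↦ ?_
    simp only [truncatedGaussian, Set.indicator_apply, Set.mem_Icc, ← abs_le, mul_ite, mul_zero,
      halfIntegerPhase, gaussianKernel, ← e_add]
    push_cast
    ring_nf
  · exact (Nat.cast_injective.tsum_eq h_support).symm

lemma integrable_mul_truncatedGaussian {f : ℝ → ℂ} (hf : Continuous f) (σ : ℂ) (m : ℝ) :
    Integrable (fun x ↦ f x * truncatedGaussian σ m x) := by
  simp only [truncatedGaussian, ← Set.indicator_mul_right]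
  exact (hf.mul (continuous_gaussianKernel_right σ m)).continuousOn.integrableOn_Icc
    |>.integrable_indicator measurableSet_Icc

lemma integral_mul_truncatedGaussian (f : ℝ → ℂ) (σ : ℂ) {m : ℝ} (hm : 0 ≤ m) :
    ∫ x, f x * truncatedGaussian σ m x = ∫ x in -m..m, f x * gaussianKernel σ m x := by
  simp only [truncatedGaussian, ← Set.indicator_mul_right]
  rw [integral_indicator measurableSet_Icc, integral_Icc_eq_integral_Ioc,
    intervalIntegral.integral_of_le (by linarith)]

lemma RapidlyDecreasing.exists_integral_norm_mul_truncatedGaussian_le {f : ℝ → ℂ} {σ : ℂ}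
    (hf : RapidlyDecreasing f) (hσ : 0 < σ.im) :
    ∃ C : ℝ, ∀ m : ℝ, 0 ≤ m → ∫ x, ‖f x * truncatedGaussian σ m x‖ ≤ C / (1 + m) ^ 2 := by
  obtain ⟨C, hC⟩ := hf.exists_gaussianKernel_mul_le hσ 3
  have hC_nonneg : 0 ≤ C := le_trans (by positivity) (hC 0 0 le_rfl)
  refine ⟨2 * C, fun m hm ↦ ?_⟩
  have h_integrand : ∀ x ∈ Set.Icc (-m) m,
      ‖‖f x * gaussianKernel σ m x‖‖ ≤ C / (1 + m) ^ 3 := by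
    intro x hx
    have h := hC m x (by rw [abs_of_nonneg hm]; exact abs_le.mpr hx)
    rw [abs_of_nonneg hm] at h
    rwa [norm_norm, norm_mul, mul_comm ‖f x‖, le_div_iff₀' (by positivity)]
  have h_integral := norm_setIntegral_le_of_norm_le_const
    (measure_Icc_lt_top (μ := (volume : Measure ℝ))) h_integrand
  simp only [truncatedGaussian, ← Set.indicator_mul_right, norm_indicator_eq_indicator_norm]
  rw [integral_indicator measurableSet_Icc]
  calc ∫ x in Set.Icc (-m) m, ‖f x * gaussianKernel σ m x‖
      ≤ C / (1 + m) ^ 3 * volume.real (Set.Icc (-m) m) := (le_abs_self _).trans h_integral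
    _ ≤ C / (1 + m) ^ 3 * (2 * (1 + m)) := by
        gcongr
        rw [Real.volume_real_Icc_of_le (by linarith)]
        linarith
    _ = 2 * C / (1 + m) ^ 2 := by field_simp

lemma RapidlyDecreasing.integral_mul_omega {f : ℝ → ℂ} {σ : ℂ} (hf : RapidlyDecreasing f)
    (hf_cont : Continuous f) (hσ : 0 < σ.im) :
    ∫ x, f x * omega σ x =
      ∑' n : ℕ, halfIntegerPhase n * ∫ x, f x * truncatedGaussian σ (n + 1 / 2) x := by
  obtain ⟨C, hC⟩ := hf.exists_integral_norm_mul_truncatedGaussian_le hσ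
  have h_summable : Summable fun n : ℕ ↦ ∫ x, ‖f x * truncatedGaussian σ (n + 1 / 2) x‖ := by
    have h_squares : Summable fun n : ℕ ↦ C * (1 / ((n + 1 : ℕ) : ℝ) ^ 2) :=
      ((summable_nat_add_iff 1).mpr
        (Real.summable_one_div_nat_pow.mpr one_lt_two)).mul_left C
    have hC_nonneg : 0 ≤ C := by
      simpa using (integral_nonneg fun x ↦ norm_nonneg _).trans (hC 0 le_rfl)
    refine h_squares.of_nonneg_of_le (fun n ↦ integral_nonneg fun x ↦ norm_nonneg _) fun n ↦
      (hC _ (by positivity)).trans ?_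
    rw [mul_one_div]
    gcongr
    push_cast
    linarith
  have h_hasSum := hasSum_integral_of_summable_integral_norm
    (F := fun (n : ℕ) x ↦ halfIntegerPhase n * (f x * truncatedGaussian σ (n + 1 / 2) x))
    (fun n ↦ (integrable_mul_truncatedGaussian hf_cont σ _).const_mul _)
    (by simpa only [norm_mul, norm_halfIntegerPhase, one_mul] using h_summable)
  simp only [integral_const_mul] at h_hasSum
  simp only [h_hasSum.tsum_eq, omega_eq_tsum_truncatedGaussian, ← tsum_mul_left,
    mul_left_comm (f _)]

lemma integral_twistedDeriv_mul_truncatedGaussian (σ : ℂ) (ψ : 𝓢(ℝ, ℂ)) {m : ℝ} (hm : 0 ≤ m) :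
    ∫ x, twistedDeriv σ ψ x * truncatedGaussian σ m x = ψ m - ψ (-m) := by
  rw [integral_mul_truncatedGaussian _ σ hm, intervalIntegral.integral_eq_sub_of_hasDerivAt
    (f := fun x ↦ ψ x * gaussianKernel σ m x)]
  · rw [gaussianKernel_neg_right, gaussianKernel_self, mul_one, mul_one]
  · intro x _
    refine ((ψ.hasDerivAt x).mul (hasDerivAt_gaussianKernel_right σ m x)).congr_deriv ?_
    rw [twistedDeriv_apply]
    ring
  · exact ((twistedDeriv σ ψ).continuous.mul
      (continuous_gaussianKernel_right σ m)).intervalIntegrable _ _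

end Pairing

section HalfIntegerComb

/-- The distribution `∑ e(m/2) δ_m` over `m ∈ ℤ + 1/2`, evaluated at `ψ`. -/
noncomputable def halfIntegerComb (ψ : 𝓢(ℝ, ℂ)) : ℂ :=
  ∑' n : ℤ, halfIntegerPhase n * ψ (n + 1 / 2)

lemma summable_apply_int_add {F : Type*} [NormedAddCommGroup F] [NormedSpace ℝ F]
    [CompleteSpace F] (ψ : 𝓢(ℝ, F)) (a : ℝ) : Summable fun n : ℤ ↦ ψ (n + a) := by
  have h_decay := ((compSubConstCLM ℝ (-a) ψ).isBigO_cocompact_rpow (-2)).comp_tendsto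
    Int.tendsto_coe_cofinite
  refine summable_of_isBigO (Real.summable_abs_int_rpow one_lt_two) ?_
  simpa [Function.comp_def] using h_decay

lemma halfIntegerPhase_neg_succ (n : ℤ) : halfIntegerPhase (-(n + 1)) = -halfIntegerPhase n := by
  have h : (((-(n + 1) : ℤ) : ℂ) + 1 / 2) / 2 =
      1 / 2 + ((-(n + 1) : ℤ) : ℂ) + ((n : ℂ) + 1 / 2) / 2 := by
    push_cast
    ring
  rw [halfIntegerPhase, h, e_add, e_add, e_half, e_intCast, mul_one, neg_one_mul, halfIntegerPhase]

lemma halfIntegerComb_eq_tsum_nat (ψ : 𝓢(ℝ, ℂ)) :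
    halfIntegerComb ψ =
      ∑' n : ℕ, halfIntegerPhase n * (ψ (n + 1 / 2) - ψ (-(n + 1 / 2))) := by
  have h_summable : Summable fun n : ℤ ↦ halfIntegerPhase n * ψ (n + 1 / 2) := by
    refine .of_norm ?_
    simpa only [norm_mul, norm_halfIntegerPhase, one_mul]
      using (summable_apply_int_add ψ (1 / 2)).norm
  have h_nonneg : Summable fun n : ℕ ↦ halfIntegerPhase n * ψ ((n : ℤ) + 1 / 2) :=
    h_summable.comp_injective Nat.cast_injective
  have h_reflect (n : ℕ) :
      halfIntegerPhase (-(n + 1)) * ψ ((-(n + 1) : ℤ) + 1 / 2) =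
        -(halfIntegerPhase n * ψ (-(n + 1 / 2))) := by
    rw [halfIntegerPhase_neg_succ, neg_mul]
    push_cast
    ring_nf
  have h_neg : Summable fun n : ℕ ↦ halfIntegerPhase (-(n + 1)) * ψ ((-(n + 1) : ℤ) + 1 / 2) :=
    h_summable.comp_injective fun m n h ↦ by simpa using h
  rw [halfIntegerComb, tsum_of_nat_of_neg_add_one
    (f := fun n : ℤ ↦ halfIntegerPhase n * ψ (n + 1 / 2)) h_nonneg h_neg]
  simp only [h_reflect, Int.cast_natCast] at h_nonneg h_neg ⊢
  rw [← h_nonneg.tsum_add h_neg]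
  simp only [← sub_eq_add_neg, mul_sub]

lemma integral_twistedDeriv_mul_omega {σ : ℂ} (hσ : 0 < σ.im) (ψ : 𝓢(ℝ, ℂ)) :
    ∫ x, twistedDeriv σ ψ x * omega σ x = halfIntegerComb ψ := by
  rw [(rapidlyDecreasing_coe _).integral_mul_omega (twistedDeriv σ ψ).continuous hσ,
    halfIntegerComb_eq_tsum_nat]
  refine tsum_congr fun n ↦ ?_
  rw [integral_twistedDeriv_mul_truncatedGaussian σ ψ (by positivity)]

lemma fourier_e_mul (ψ : ℝ → ℂ) (b x : ℝ) :
    𝓕 (fun y : ℝ ↦ e (b * y) * ψ y) x = 𝓕⁻ ψ (b - x) := by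
  rw [← fourierT_eq_fourierInv, fourierT, Real.fourier_real_eq_integral_exp_smul]
  congr 1 with y
  rw [smul_eq_mul, ← mul_assoc, mul_comm (ψ y), e, e, ← Complex.exp_add]
  push_cast
  ring_nf

lemma tsum_e_mul_eq_tsum_fourierInv (ψ : 𝓢(ℝ, ℂ)) (a b : ℝ) :
    ∑' n : ℤ, e (b * (n + a)) * ψ (n + a) = ∑' n : ℤ, e (-(n * a)) * (𝓕⁻ ψ : 𝓢(ℝ, ℂ)) (n + b) := by
  have h_cont : Continuous fun x : ℝ ↦ e (b * x) * ψ x :=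
    (by unfold e; fun_prop : Continuous fun x : ℝ ↦ e (b * x)).mul ψ.continuous
  have h_decay : (fun x : ℝ ↦ e (b * x) * ψ x) =O[Filter.cocompact ℝ] (|·| ^ (-2 : ℝ)) := by
    refine .trans (.of_norm_eventuallyLE (.of_forall fun x ↦ ?_))
      (ψ.isBigO_cocompact_rpow (-2)).norm_left
    beta_reduce
    rw [norm_mul, ← Complex.ofReal_mul, norm_e_ofReal, one_mul]
  have h_fourier (n : ℤ) : 𝓕 (fun x : ℝ ↦ e (b * x) * ψ x) n = (𝓕⁻ ψ) ((-n : ℤ) + b) := by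
    rw [fourier_e_mul, fourierInv_coe]
    push_cast
    ring_nf
  have h_summable : Summable fun n : ℤ ↦ 𝓕 (fun x : ℝ ↦ e (b * x) * ψ x) n := by
    simp only [h_fourier]
    exact (summable_apply_int_add (𝓕⁻ ψ) b).comp_injective neg_injective
  have h_poisson := Real.tsum_eq_tsum_fourier_of_rpow_decay_of_summable h_cont one_lt_two h_decay
    h_summable a
  calc ∑' n : ℤ, e (b * (n + a)) * ψ (n + a)
      = ∑' n : ℤ, e (b * (a + n : ℝ)) * ψ (a + n) := by
        push_cast
        simp only [add_comm]
    _ = ∑' n : ℤ, e (n * a) * (𝓕⁻ ψ) ((-n : ℤ) + b) := by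
        rw [h_poisson]
        refine tsum_congr fun n ↦ ?_
        rw [h_fourier, fourier_coe_apply, mul_comm, e, Complex.ofReal_one, div_one,
          mul_assoc _ _ (a : ℂ)]
    _ = ∑' n : ℤ, e (-(n * a)) * (𝓕⁻ ψ : 𝓢(ℝ, ℂ)) (n + b) := by
        rw [← (Equiv.neg ℤ).tsum_eq]
        simp

lemma halfIntegerComb_fourierInv (ψ : 𝓢(ℝ, ℂ)) :
    halfIntegerComb (𝓕⁻ ψ) = I * halfIntegerComb ψ := by
  have h_poisson := tsum_e_mul_eq_tsum_fourierInv ψ (1 / 2) (1 / 2)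
  have h_phase_dual (n : ℤ) : halfIntegerPhase n = I * e (-(n * (1 / 2 : ℝ))) := by
    rw [halfIntegerPhase, ← e_quarter, ← e_add, ← mul_one (e (1 / 4 + _)), ← e_intCast n, ← e_add]
    push_cast
    ring_nf
  have h_phase (n : ℤ) : halfIntegerPhase n = e ((1 / 2 : ℝ) * (n + (1 / 2 : ℝ))) := by
    rw [halfIntegerPhase]
    push_cast
    ring_nf
  calc halfIntegerComb (𝓕⁻ ψ) = I * ∑' n : ℤ, e (-(n * (1 / 2 : ℝ))) * (𝓕⁻ ψ) (n + 1 / 2) := by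
        simp only [halfIntegerComb, h_phase_dual, mul_assoc, tsum_mul_left]
    _ = I * halfIntegerComb ψ := by
        rw [← h_poisson]
        simp only [halfIntegerComb, h_phase]

lemma integral_fourierT_twistedDeriv_mul_omega {τ : ℂ} (hτ : 0 < τ.im) (ψ : 𝓢(ℝ, ℂ)) :
    ∫ x, fourierT (twistedDeriv (-1 / τ) ψ) x * omega τ x =
      τ⁻¹ * (I * halfIntegerComb ψ) := by
  have hτ_ne : τ ≠ 0 := by rintro rfl; simp at hτ
  rw [fourierT_eq_fourierInv, ← fourierInv_coe, fourierInv_twistedDeriv hτ_ne]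
  simp only [smul_apply, smul_eq_mul, mul_assoc, integral_const_mul]
  rw [integral_twistedDeriv_mul_omega hτ, halfIntegerComb_fourierInv]

end HalfIntegerComb

end

/-- `F(I(ω_τ)) = (-iτ)⁻¹ I(ω_{-1/τ})`. -/
theorem omega_fourier (τ : ℂ) (hτ : 0 < τ.im) (φ : SchwartzMap ℝ ℂ) :
    (∫ x : ℝ, fourierT (φ : ℝ → ℂ) x * omega τ x) =
      (-Complex.I * τ)⁻¹ * ∫ x : ℝ, φ x * omega (-1/τ) x := by
  have hσ : 0 < (-1 / τ).im := by
    simpa [neg_div, inv_neg] using UpperHalfPlane.im_inv_neg_coe_pos ⟨τ, hτ⟩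
  obtain ⟨ψ, rfl⟩ := twistedDeriv_surjective hσ φ
  rw [integral_fourierT_twistedDeriv_mul_omega hτ, integral_twistedDeriv_mul_omega hσ, mul_inv,
    inv_neg, Complex.inv_I]
  ring
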